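/- Let S be a semitopological semigroup and let (S,(K,weak*)) be a nonexpansive dynamical system, where K is a weak* compact convex subset of the dual space X* of an M-embedded Banach space X. Suppose WAP(S) has a left invariant mean and the enveloping semigroup E(S,K) consists of weak* continuous functions. Then there is x ∈ K with sx = x for all s ∈ S, and the fixed point set F(S) = {x ∈ K : sx = x for all s ∈ S} is a nonexpansive retract of K, i.e., there is a map r: K → K with r(K) ⊆ F(S), r ∘ r = r, r fixing F(S) pointwise, and ‖r(x) − r(y)‖ ≤ ‖x − y‖ for all x, y ∈ K. -/

import Mathlib

open Set MeasureTheory BoundedContinuousFunction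

noncomputable section

universe u v

/-- The weak topology on a topological module `X` over `𝕜`: the coarsest topology making all
continuous linear functionals continuous. -/
def weakTop (𝕜 : Type*) (X : Type*) [NontriviallyNormedField 𝕜] [AddCommGroup X]
    [Module 𝕜 X] [TopologicalSpace X] : TopologicalSpace X :=
  ⨅ f : X →L[𝕜] 𝕜, TopologicalSpace.induced (⇑f) inferInstance

/-- A semitopological semigroup: multiplication is separately continuous. -/
def IsSemitopologicalSemigroup (S : Type*) [Semigroup S] [TopologicalSpace S] : Prop :=
  (∀ t : S, Continuous fun s => t * s) ∧ (∀ t : S, Continuous fun s => s * t)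

section CbDefs

variable (S : Type u) [Semigroup S] [TopologicalSpace S]

/-- `g` is the family of left translates of `f`: `g s = L_s f` where `L_s f (t) = f (s * t)`. -/
def IsLTranslates (f : S →ᵇ ℂ) (g : S → S →ᵇ ℂ) : Prop :=
  ∀ s t, g s t = f (s * t)

/-- `LUC(S)`: bounded continuous `f` such that `s ↦ L_s f` is norm continuous. -/
def LUCset : Set (S →ᵇ ℂ) :=
  {f | ∃ g, IsLTranslates S f g ∧ Continuous g}

/-- `AP(S)`: bounded continuous `f` whose set of left translates is relatively compact in the
norm topology of `C(S)`. -/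
def APset : Set (S →ᵇ ℂ) :=
  {f | ∃ g, IsLTranslates S f g ∧ IsCompact (closure (Set.range g))}

/-- `WAP(S)`: bounded continuous `f` whose set of left translates is relatively compact in the
weak topology of `C(S)`. -/
def WAPset : Set (S →ᵇ ℂ) :=
  {f | ∃ g, IsLTranslates S f g ∧
    @IsCompact _ (weakTop ℂ (S →ᵇ ℂ)) (@closure _ (weakTop ℂ (S →ᵇ ℂ)) (Set.range g))}

/-- The topology on `C(S)` induced by the multiplicative means. -/
def lmcTop : TopologicalSpace (S →ᵇ ℂ) :=
  ⨅ μ : {μ : (S →ᵇ ℂ) →L[ℂ] ℂ // ‖μ‖ = 1 ∧ μ 1 = 1 ∧ ∀ f g, μ (f * g) = μ f * μ g},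
    TopologicalSpace.induced (⇑μ.1) inferInstance

/-- `LMC(S)`: bounded continuous `f` such that `s ↦ L_s f` is continuous into `C(S)` with the
topology induced by the multiplicative means. -/
def LMCset : Set (S →ᵇ ℂ) :=
  {f | ∃ g, IsLTranslates S f g ∧ @Continuous _ _ _ (lmcTop S) g}

/-- `Y ⊆ C(S)` has a left invariant mean: there is a norm-one functional `μ` on `C(S)` with
`μ 1 = 1` and `μ (L_s f) = μ f` for all `f ∈ Y` and `s ∈ S`.  (By the Hahn–Banach extension
theorem this is equivalent to the existence of a left invariant mean on the subspace `Y`.) -/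
def HasLIM (Y : Set (S →ᵇ ℂ)) : Prop :=
  ∃ μ : (S →ᵇ ℂ) →L[ℂ] ℂ, ‖μ‖ = 1 ∧ μ 1 = 1 ∧
    ∀ f ∈ Y, ∀ g : S → S →ᵇ ℂ, IsLTranslates S f g → ∀ s, μ (g s) = μ f

end CbDefs

/-- The weak-star topology on the dual of a normed space: the topology of pointwise
convergence. -/
def wstarTop (X : Type*) [SeminormedAddCommGroup X] [NormedSpace ℝ X] :
    TopologicalSpace (StrongDual ℝ X) :=
  TopologicalSpace.induced (fun (f : StrongDual ℝ X) (x : X) => f x) Pi.topologicalSpace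

set_option maxSynthPendingDepth 3 in
/-- A Banach space `X` is `M`-embedded if `X` is an `M`-ideal in its bidual, i.e.
`X*** = X* ⊕₁ X^⊥`. -/
def MEmbeddedSpace (X : Type v) [NormedAddCommGroup X] [NormedSpace ℝ X] : Prop :=
  -- every `F ∈ X***` decomposes as `F = g + H` with `g` in the canonical image of `X*`
  -- and `H ∈ X^⊥`
  (∀ F : StrongDual ℝ (StrongDual ℝ (StrongDual ℝ X)),
    ∃ (g : StrongDual ℝ X)
      (H : StrongDual ℝ (StrongDual ℝ (StrongDual ℝ X))),
      (∀ x : X, H (NormedSpace.inclusionInDoubleDual ℝ X x) = 0) ∧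
      F = NormedSpace.inclusionInDoubleDual ℝ (StrongDual ℝ X) g + H) ∧
  -- and the decomposition is an `ℓ¹`-decomposition
  (∀ (g : StrongDual ℝ X)
      (H : StrongDual ℝ (StrongDual ℝ (StrongDual ℝ X))),
    (∀ x : X, H (NormedSpace.inclusionInDoubleDual ℝ X x) = 0) →
    ‖NormedSpace.inclusionInDoubleDual ℝ (StrongDual ℝ X) g + H‖ =
      ‖NormedSpace.inclusionInDoubleDual ℝ (StrongDual ℝ X) g‖ + ‖H‖)

section DualOfContinuousMap

open CompactlySupported Filter Topology
open scoped NNReal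

variable {Q : Type*} [TopologicalSpace Q]

/-- The values defining the total variation of a functional `ν` at `f ≥ 0`. -/
def variationSet (ν : C(Q, ℂ) →L[ℂ] ℂ) (f : Q → ℝ≥0) : Set ℝ≥0 :=
  {t | ∃ g : C(Q, ℂ), (∀ q, ‖g q‖₊ ≤ f q) ∧ ‖ν g‖₊ = t}

lemma variationSet_nonempty (ν : C(Q, ℂ) →L[ℂ] ℂ) (f : Q → ℝ≥0) :
    (variationSet ν f).Nonempty :=
  ⟨_, 0, fun _ => by simp, rfl⟩

lemma variationSet_bddAbove [CompactSpace Q] (ν : C(Q, ℂ) →L[ℂ] ℂ) {f : Q → ℝ≥0}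
    (hf : Continuous f) : BddAbove (variationSet ν f) := by
  obtain ⟨M, hM⟩ := (isCompact_range hf).bddAbove
  refine ⟨‖ν‖₊ * M, ?_⟩
  rintro _ ⟨g, hg, rfl⟩
  refine (ν.le_opNNNorm g).trans ?_
  gcongr
  have : ‖g‖ ≤ (M : ℝ) := (ContinuousMap.norm_le _ M.2).2 fun q => by
    exact_mod_cast (hg q).trans (hM ⟨q, rfl⟩)
  exact_mod_cast this

lemma exists_norm_le_one_mul_eq_norm (z : ℂ) : ∃ c : ℂ, ‖c‖ ≤ 1 ∧ c * z = (‖z‖ : ℂ) := by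
  by_cases hz : z = 0
  · exact ⟨0, by simp [hz]⟩
  · have h : (‖z‖ : ℂ) ≠ 0 := by simpa using hz
    refine ⟨(‖z‖ : ℂ) / z, ?_, by field_simp⟩
    simp [hz]

lemma sSup_variationSet_add [CompactSpace Q] (ν : C(Q, ℂ) →L[ℂ] ℂ)
    {f₁ f₂ : Q → ℝ≥0} (h₁ : Continuous f₁) (h₂ : Continuous f₂) :
    sSup (variationSet ν (f₁ + f₂)) = sSup (variationSet ν f₁) + sSup (variationSet ν f₂) := by
  apply le_antisymm
  · refine csSup_le (variationSet_nonempty _ _) ?_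
    rintro _ ⟨g, hg, rfl⟩
    -- split `g` proportionally to `f₁` and `f₂`, up to an error of size `ε`
    refine le_of_forall_pos_le_add fun δ hδ => ?_
    obtain ⟨ε, hε, hεδ⟩ : ∃ ε : ℝ≥0, 0 < ε ∧ ‖ν‖₊ * ε ≤ δ := by
      refine ⟨δ / (‖ν‖₊ + 1), by positivity, ?_⟩
      rw [mul_div_assoc', div_le_iff₀ (by positivity), mul_comm]
      gcongr
      simp
    have hpos : ∀ q, 0 < f₁ q + f₂ q + ε := fun q => by positivity
    have hcont : ∀ {f : Q → ℝ≥0}, Continuous f →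
        Continuous fun q => (((f q / (f₁ q + f₂ q + ε) : ℝ≥0) : ℝ) : ℂ) * g q := by
      intro f hf
      have : Continuous fun q => f q / (f₁ q + f₂ q + ε) :=
        hf.div₀ (by fun_prop) fun q => (hpos q).ne'
      fun_prop
    have hbound : ∀ {f : Q → ℝ≥0} (q : Q),
        ‖(((f q / (f₁ q + f₂ q + ε) : ℝ≥0) : ℝ) : ℂ) * g q‖₊ ≤ f q := by
      intro f q
      rw [nnnorm_mul]
      have : ‖(((f q / (f₁ q + f₂ q + ε) : ℝ≥0) : ℝ) : ℂ)‖₊ = f q / (f₁ q + f₂ q + ε) := by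
        rw [Complex.nnnorm_real, NNReal.nnnorm_eq]
      rw [this, div_mul_eq_mul_div, div_le_iff₀ (hpos q)]
      gcongr
      exact (hg q).trans (by simp)
    let g₁ : C(Q, ℂ) := ⟨_, hcont h₁⟩
    let g₂ : C(Q, ℂ) := ⟨_, hcont h₂⟩
    have hrest : ‖g - g₁ - g₂‖ ≤ (ε : ℝ) := by
      refine (ContinuousMap.norm_le _ ε.2).2 fun q => ?_
      have hq : ((f₁ q : ℝ) : ℂ) + ((f₂ q : ℝ) : ℂ) + ((ε : ℝ) : ℂ) ≠ 0 := by
        exact_mod_cast (hpos q).ne'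
      have : (g - g₁ - g₂) q = (((ε / (f₁ q + f₂ q + ε) : ℝ≥0) : ℝ) : ℂ) * g q := by
        simp only [ContinuousMap.sub_apply, g₁, g₂, ContinuousMap.coe_mk]
        push_cast
        field_simp
        ring
      rw [this]
      exact_mod_cast hbound (f := fun _ => ε) q
    have e : ν g = ν g₁ + ν g₂ + ν (g - g₁ - g₂) := by
      rw [← map_add, ← map_add]; congr 1; abel
    rw [e]
    refine (nnnorm_add_le _ _).trans (add_le_add ((nnnorm_add_le _ _).trans (add_le_add ?_ ?_)) ?_)
    · exact le_csSup (variationSet_bddAbove ν h₁) ⟨g₁, hbound, rfl⟩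
    · exact le_csSup (variationSet_bddAbove ν h₂) ⟨g₂, hbound, rfl⟩
    · refine ((ν.le_opNNNorm _).trans ?_).trans hεδ
      gcongr
      exact_mod_cast hrest
  · have key : ∀ a ∈ variationSet ν f₁, ∀ b ∈ variationSet ν f₂,
        a + b ≤ sSup (variationSet ν (f₁ + f₂)) := by
      rintro _ ⟨g₁, hg₁, rfl⟩ _ ⟨g₂, hg₂, rfl⟩
      obtain ⟨c₁, hc₁, e₁⟩ := exists_norm_le_one_mul_eq_norm (ν g₁)
      obtain ⟨c₂, hc₂, e₂⟩ := exists_norm_le_one_mul_eq_norm (ν g₂)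
      refine le_csSup (variationSet_bddAbove ν (h₁.add h₂)) ⟨c₁ • g₁ + c₂ • g₂, fun q => ?_, ?_⟩
      · refine (nnnorm_add_le _ _).trans (add_le_add ((?_ : _ ≤ _).trans (hg₁ q))
          ((?_ : _ ≤ _).trans (hg₂ q)))
        · rw [ContinuousMap.smul_apply, nnnorm_smul]
          exact mul_le_of_le_one_left zero_le (by exact_mod_cast hc₁)
        · rw [ContinuousMap.smul_apply, nnnorm_smul]
          exact mul_le_of_le_one_left zero_le (by exact_mod_cast hc₂)
      · rw [map_add, map_smul, map_smul, smul_eq_mul, smul_eq_mul, e₁, e₂, ← Complex.ofReal_add]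
        rw [Complex.nnnorm_real, ← coe_nnnorm, ← coe_nnnorm, ← NNReal.coe_add, NNReal.nnnorm_eq]
    have hle : ∀ a ∈ variationSet ν f₁,
        a + sSup (variationSet ν f₂) ≤ sSup (variationSet ν (f₁ + f₂)) := by
      intro a ha
      refine add_le_of_le_tsub_left_of_le ?_ (csSup_le (variationSet_nonempty _ _) fun b hb =>
        le_tsub_of_add_le_left (key a ha b hb))
      obtain ⟨b, hb⟩ := variationSet_nonempty ν f₂
      exact le_self_add.trans (key a ha b hb)
    refine add_le_of_le_tsub_right_of_le ?_ (csSup_le (variationSet_nonempty _ _) fun a ha =>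
      le_tsub_of_add_le_right (hle a ha))
    obtain ⟨a, ha⟩ := variationSet_nonempty ν f₁
    exact le_add_self.trans (hle a ha)

lemma smul_mem_variationSet (ν : C(Q, ℂ) →L[ℂ] ℂ) (f : Q → ℝ≥0) (c : ℝ≥0) {t : ℝ≥0}
    (ht : t ∈ variationSet ν f) : c * t ∈ variationSet ν (c • f) := by
  obtain ⟨g, hg, rfl⟩ := ht
  have hc : ‖((c : ℝ) : ℂ)‖₊ = c := by rw [Complex.nnnorm_real, NNReal.nnnorm_eq]
  refine ⟨((c : ℝ) : ℂ) • g, fun q => ?_, ?_⟩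
  · rw [ContinuousMap.smul_apply, nnnorm_smul, hc]
    exact mul_le_mul_right (hg q) c
  · rw [map_smul, nnnorm_smul, hc]

lemma sSup_variationSet_smul [CompactSpace Q] (ν : C(Q, ℂ) →L[ℂ] ℂ)
    {f : Q → ℝ≥0} (hf : Continuous f)
    (c : ℝ≥0) :
    sSup (variationSet ν (c • f)) = c * sSup (variationSet ν f) := by
  have key : ∀ (f : Q → ℝ≥0) (_ : Continuous f) (c : ℝ≥0) (_ : c ≠ 0),
      c * sSup (variationSet ν f) ≤ sSup (variationSet ν (c • f)) := by
    intro f hf c hc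
    rw [mul_comm, ← le_div_iff₀ (pos_iff_ne_zero.2 hc)]
    refine csSup_le (variationSet_nonempty _ _) fun t ht => ?_
    rw [le_div_iff₀ (pos_iff_ne_zero.2 hc), mul_comm]
    exact le_csSup (variationSet_bddAbove ν (hf.const_smul c)) (smul_mem_variationSet ν f c ht)
  rcases eq_or_ne c 0 with rfl | hc
  · rw [zero_mul, zero_smul]
    refine le_antisymm (csSup_le (variationSet_nonempty _ _) ?_) zero_le
    rintro _ ⟨g, hg, rfl⟩
    have : g = 0 := by
      ext q
      simpa using hg q
    simp [this]
  · refine le_antisymm ?_ (key f hf c hc)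
    have := key (c • f) (hf.const_smul c) c⁻¹ (inv_ne_zero hc)
    rw [inv_smul_smul₀ hc] at this
    rwa [inv_mul_le_iff₀ (pos_iff_ne_zero.2 hc)] at this

/-- The total variation of a continuous functional on `C(Q)`, as a positive functional. -/
def variationFunctional [CompactSpace Q] (ν : C(Q, ℂ) →L[ℂ] ℂ) : C_c(Q, ℝ≥0) →ₗ[ℝ≥0] ℝ≥0 where
  toFun f := sSup (variationSet ν f)
  map_add' f g := sSup_variationSet_add ν f.continuous g.continuous
  map_smul' c f := sSup_variationSet_smul ν f.continuous c

/-- Bounded pointwise null sequences of continuous functions on a compact space are weakly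
null. -/
lemma tendsto_zero_of_pointwise [CompactSpace Q] [T2Space Q] (ν : C(Q, ℂ) →L[ℂ] ℂ)
    {f : ℕ → C(Q, ℂ)} {M : ℝ}
    (hM : ∀ n, ‖f n‖ ≤ M) (hf : ∀ q, Tendsto (fun n => f n q) atTop (𝓝 0)) :
    Tendsto (fun n => ν (f n)) atTop (𝓝 0) := by
  let _ : MeasurableSpace Q := borel Q
  have : BorelSpace Q := ⟨rfl⟩
  let Λ := variationFunctional ν
  let m := NNRealRMK.rieszMeasure Λ
  let F : ℕ → C_c(Q, ℝ≥0) := fun n =>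
    CompactlySupportedContinuousMap.continuousMapEquiv ⟨fun q => ‖f n q‖₊, by fun_prop⟩
  have hint : ∀ n, ∫ q, ‖f n q‖ ∂m = (Λ (F n) : ℝ) := fun n =>
    NNRealRMK.integral_rieszMeasure Λ (F n)
  have hlim : Tendsto (fun n => ∫ q, ‖f n q‖ ∂m) atTop (𝓝 (∫ _ : Q, (0 : ℝ) ∂m)) := by
    refine tendsto_integral_of_dominated_convergence (fun _ => M) (fun n => ?_) ?_
      (fun n => ?_) ?_
    · exact ((f n).continuous.norm).aestronglyMeasurable
    · exact integrable_const M
    · exact .of_forall fun q => by simpa using ((f n).norm_coe_le_norm q).trans (hM n)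
    · exact .of_forall fun q => by simpa using (hf q).norm
  rw [integral_zero] at hlim
  refine squeeze_zero_norm (fun n => ?_) hlim
  rw [hint]
  exact_mod_cast le_csSup (variationSet_bddAbove ν (F n).continuous)
    ⟨f n, fun q => le_rfl, rfl⟩

/-- Grothendieck's theorem: a bounded family of continuous functions on a compact space `Q`
depending pointwise continuously on a compact parameter depends weakly continuously on it. -/
theorem continuous_apply_of_continuous_eval [CompactSpace Q] [T2Space Q] {P : Type*}
    [TopologicalSpace P] [CompactSpace P] (ψ : P → C(Q, ℂ))
    (hψ : ∀ q, Continuous fun p => ψ p q) {M : ℝ}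
    (hM : ∀ p, ‖ψ p‖ ≤ M) (ν : C(Q, ℂ) →L[ℂ] ℂ) : Continuous fun p => ν (ψ p) := by
  rw [continuous_iff_continuousAt]
  intro p₀
  by_contra hcont
  obtain ⟨ε, hε, hfreq⟩ : ∃ ε > 0, ∃ᶠ p in 𝓝 p₀, ε ≤ dist (ν (ψ p)) (ν (ψ p₀)) := by
    rw [ContinuousAt, Metric.tendsto_nhds] at hcont
    push Not at hcont
    simpa using hcont
  -- for finitely many parameters there is a finite set which is `ε`-dense for them
  have hnet : ∀ (s : Finset P) (δ : ℝ), 0 < δ →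
      ∃ D : Finset Q, ∀ q, ∃ d ∈ D, ∀ p ∈ s, dist (ψ p q) (ψ p d) < δ := by
    intro s δ hδ
    have hopen : ∀ d : Q, IsOpen {q | ∀ p ∈ s, dist (ψ p q) (ψ p d) < δ} := fun d => by
      have : {q | ∀ p ∈ s, dist (ψ p q) (ψ p d) < δ}
          = ⋂ p ∈ s, {q | dist (ψ p q) (ψ p d) < δ} := by ext; simp
      rw [this]
      exact isOpen_biInter_finset fun p _ => isOpen_lt (by fun_prop) continuous_const
    obtain ⟨D, hD⟩ := isCompact_univ.elim_finite_subcover _ hopen fun q _ =>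
      mem_iUnion.2 ⟨q, fun p _ => by simpa using hδ⟩
    refine ⟨D, fun q => ?_⟩
    simpa using hD (mem_univ q)
  choose! D hD using hnet
  have hpos : ∀ n : ℕ, (0 : ℝ) < 1 / (n + 1) := fun n => Nat.one_div_pos_of_nat
  -- choose parameters `p n` close to `p₀` on the finite sets attached to the previous ones
  obtain ⟨p, A, hA₀, hAp, hpε, hpd⟩ : ∃ (p : ℕ → P) (A : ℕ → Finset P), (∀ n, p₀ ∈ A n) ∧
      (∀ i n, i < n → p i ∈ A n) ∧ (∀ n, ε ≤ dist (ν (ψ (p n))) (ν (ψ p₀))) ∧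
      ∀ k n, k ≤ n → ∀ d ∈ D (A k) (1 / (k + 1)), dist (ψ (p n) d) (ψ p₀ d) < 1 / (n + 1) := by
    classical
    have hpick : ∀ (B : Finset Q) (n : ℕ), ∃ p, ε ≤ dist (ν (ψ p)) (ν (ψ p₀)) ∧
        ∀ d ∈ B, dist (ψ p d) (ψ p₀ d) < 1 / (n + 1) := by
      intro B n
      refine (hfreq.and_eventually ?_).exists
      refine (Filter.eventually_all_finset B).2 fun d _ => ?_
      exact Metric.tendsto_nhds.1 (hψ d).continuousAt _ (hpos n)
    choose pick hpick₁ hpick₂ using hpick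
    let st : ℕ → Finset P × Finset Q := fun n => Nat.rec ({p₀}, ∅) (fun n st =>
      (insert (pick (st.2 ∪ D st.1 (1 / (n + 1))) n) st.1, st.2 ∪ D st.1 (1 / (n + 1)))) n
    have hst₁ : ∀ n, (st (n + 1)).1 = insert (pick (st (n + 1)).2 n) (st n).1 := fun n => rfl
    have hst₂ : ∀ n, (st (n + 1)).2 = (st n).2 ∪ D (st n).1 (1 / (n + 1)) := fun n => rfl
    have hmono₁ : Monotone fun n => (st n).1 :=
      monotone_nat_of_le_succ fun n => by
        rw [hst₁]; exact Finset.subset_insert _ _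
    have hmono₂ : Monotone fun n => (st n).2 :=
      monotone_nat_of_le_succ fun n => by
        rw [hst₂]; exact Finset.subset_union_left
    refine ⟨fun n => pick (st (n + 1)).2 n, fun n => (st n).1, fun n => ?_, fun i n hin => ?_,
      fun n => hpick₁ _ _, fun k n hkn d hd => hpick₂ _ _ d ?_⟩
    · exact hmono₁ (Nat.zero_le n) (Finset.mem_singleton_self p₀)
    · exact hmono₁ (Nat.succ_le_of_lt hin) (by simp [hst₁])
    · exact hmono₂ (Nat.succ_le_succ hkn) (Finset.mem_union_right _ hd)
  have hptw : ∀ q, Tendsto (fun n => ψ (p n) q) atTop (𝓝 (ψ p₀ q)) := by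
    intro q
    choose d hdD hd using fun k : ℕ => hD (A k) (1 / (k + 1)) (hpos k) q
    rw [tendsto_iff_ultrafilter]
    intro U hU
    have hzero : Tendsto (fun n : ℕ => (1 : ℝ) / (n + 1)) U (𝓝 0) :=
      tendsto_one_div_add_atTop_nhds_zero_nat.mono_left hU
    obtain ⟨p', -, hp'⟩ := isCompact_univ.ultrafilter_le_nhds (U.map p) (by simp)
    obtain ⟨q', -, hq'⟩ := isCompact_univ.ultrafilter_le_nhds (U.map d) (by simp)
    have hp' : Tendsto p U (𝓝 p') := hp'
    have hq' : Tendsto d U (𝓝 q') := hq'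
    have hlimp : ∀ q, Tendsto (fun n => ψ (p n) q) U (𝓝 (ψ p' q)) := fun q =>
      ((hψ q).tendsto p').comp hp'
    have hlimq : ∀ p, Tendsto (fun n => ψ p (d n)) U (𝓝 (ψ p q')) := fun p =>
      ((ψ p).continuous.tendsto q').comp hq'
    have hqq' : ∀ p, (∀ᶠ k in atTop, p ∈ A k) → ψ p q' = ψ p q := fun p hp => by
      refine tendsto_nhds_unique (hlimq p) (tendsto_iff_dist_tendsto_zero.2 ?_)
      refine squeeze_zero' (.of_forall fun _ => dist_nonneg) ?_ hzero
      filter_upwards [hU hp] with k hk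
      rw [dist_comm]
      exact (hd k p hk).le
    have h₀ : ψ p₀ q' = ψ p₀ q := hqq' p₀ (.of_forall hA₀)
    have h₁ : ψ p' q = ψ p' q' := by
      refine tendsto_nhds_unique (hlimp q) ((hlimp q').congr fun n => hqq' (p n) ?_)
      filter_upwards [eventually_gt_atTop n] with k hk using hAp n k hk
    have h₂ : ∀ k, ψ p' (d k) = ψ p₀ (d k) := fun k => by
      refine tendsto_nhds_unique (hlimp (d k)) (tendsto_iff_dist_tendsto_zero.2 ?_)
      refine squeeze_zero' (.of_forall fun _ => dist_nonneg) ?_ hzero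
      filter_upwards [hU (eventually_ge_atTop k)] with n hn
      exact (hpd k n hn _ (hdD k)).le
    have h₃ : ψ p' q' = ψ p₀ q' :=
      tendsto_nhds_unique (hlimq p') ((hlimq p₀).congr fun k => (h₂ k).symm)
    have := hlimp q
    rwa [h₁, h₃, h₀] at this
  have hnull : Tendsto (fun n => ν (ψ (p n) - ψ p₀)) atTop (𝓝 0) := by
    refine tendsto_zero_of_pointwise ν (M := M + M)
      (fun n => (norm_sub_le _ _).trans (add_le_add (hM _) (hM _))) fun q => ?_
    simpa using (hptw q).sub_const (ψ p₀ q)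
  have hev := (Metric.tendsto_nhds.1 hnull ε hε).exists
  obtain ⟨n, hn⟩ := hev
  rw [map_sub, dist_zero_right, ← dist_eq_norm] at hn
  exact absurd (hpε n) (not_le.2 hn)

end DualOfContinuousMap
section SemitopologicalSemigroup

open Filter Topology

/-- If `C(E)`, with `E` a compact semitopological semigroup, carries a left invariant mean, then
the kernel of `E` contains a closed subgroup `G`, with identity `e`, which is a left ideal. -/
theorem exists_isClosed_subgroup_of_leftInvariant {E : Type*} [Semigroup E]
    [TopologicalSpace E] [CompactSpace E] [T2Space E] [Nonempty E]
    (hl : ∀ p : E, Continuous fun q => p * q) (hr : ∀ q : E, Continuous fun p => p * q)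
    (m : C(E, ℂ) → ℂ) (hm₀ : m 0 = 0) (hm₁ : m 1 = 1)
    (hinv : ∀ (p : E) (ψ : C(E, ℂ)), m (ψ.comp ⟨fun q => p * q, hl p⟩) = m ψ) :
    ∃ (G : Set E) (e : E), IsClosed G ∧ e ∈ G ∧ (∀ p, (fun q => p * q) '' G = G) ∧
      (∀ g ∈ G, e * g = g) ∧ (∀ g ∈ G, g * e = g) ∧ ∀ g ∈ G, ∃ h ∈ G, h * g = e := by
  let I : Set (Set E) := {R | IsClosed R ∧ R.Nonempty ∧ ∀ r ∈ R, ∀ q, r * q ∈ R}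
  have hinter : ∀ R₁ ∈ I, ∀ R₂ ∈ I, (R₁ ∩ R₂).Nonempty := by
    rintro R₁ ⟨hc₁, ⟨r₁, hr₁⟩, hi₁⟩ R₂ ⟨hc₂, ⟨r₂, hr₂⟩, hi₂⟩
    by_contra hemp
    obtain ⟨f, hf₁, hf₂, -⟩ := exists_continuous_zero_one_of_isClosed hc₁ hc₂
      (disjoint_iff_inter_eq_empty.2 (not_nonempty_iff_eq_empty.1 hemp))
    let ψ : C(E, ℂ) := ⟨fun q => (f q : ℂ), by fun_prop⟩
    have e₁ : ψ.comp ⟨fun q => r₁ * q, hl r₁⟩ = 0 := by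
      ext q
      simp [ψ, hf₁ (hi₁ r₁ hr₁ q)]
    have e₂ : ψ.comp ⟨fun q => r₂ * q, hl r₂⟩ = 1 := by
      ext q
      simp [ψ, hf₂ (hi₂ r₂ hr₂ q)]
    have h₁ := hinv r₁ ψ
    have h₂ := hinv r₂ ψ
    rw [e₁, hm₀] at h₁
    rw [e₂, hm₁, ← h₁] at h₂
    exact one_ne_zero h₂
  have hI : I.Nonempty := ⟨univ, isClosed_univ, univ_nonempty, fun _ _ _ => mem_univ _⟩
  -- the smallest closed right ideal
  let R := ⋂₀ I
  have hRmem : R ∈ I := by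
    refine ⟨isClosed_sInter fun A hA => hA.1, ?_, fun r hr q A hA => hA.2.2 r (hr A hA) q⟩
    have : Nonempty I := hI.to_subtype
    refine IsCompact.nonempty_sInter_of_directed_nonempty_isCompact_isClosed ?_
      (fun A hA => hA.2.1) (fun A hA => hA.1.isCompact) fun A hA => hA.1
    intro A hA B hB
    refine ⟨A ∩ B, ⟨hA.1.inter hB.1, hinter A hA B hB, fun r hr q => ?_⟩,
      inter_subset_left, inter_subset_right⟩
    exact ⟨hA.2.2 r hr.1 q, hB.2.2 r hr.2 q⟩
  obtain ⟨hRc, hRne, hRi⟩ := hRmem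
  have hRsub : ∀ p, R ⊆ (fun q => p * q) '' R := fun p => by
    refine sInter_subset_of_mem ⟨(hl p).isClosedMap _ hRc, hRne.image _, ?_⟩
    rintro _ ⟨r, hr, rfl⟩ q
    exact ⟨r * q, hRi r hr q, (mul_assoc _ _ _).symm⟩
  have hRmaps : ∀ p, ∀ r ∈ R, p * r ∈ R := by
    intro p
    have : R ⊆ R ∩ (fun q => p * q) ⁻¹' R := by
      refine sInter_subset_of_mem ⟨hRc.inter (hRc.preimage (hl p)), ?_, ?_⟩
      · obtain ⟨r, hr⟩ := hRne
        obtain ⟨r', hr', rfl⟩ := hRsub p hr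
        exact ⟨r', hr', hr⟩
      · rintro r ⟨hr, hpr⟩ q
        refine ⟨hRi r hr q, ?_⟩
        change p * (r * q) ∈ R
        rw [← mul_assoc]
        exact hRi _ hpr q
    exact fun r hr => (this hr).2
  obtain ⟨e, he, hee⟩ := exists_idempotent_in_compact_subsemigroup hr R hRne hRc.isCompact
    fun x hx y _ => hRi x hx y
  have hleft : ∀ r ∈ R, e * r = r := fun r hr => by
    obtain ⟨r', -, rfl⟩ := hRsub e hr
    simp only [← mul_assoc, hee]
  have hright : ∀ g ∈ (fun q => q * e) '' R, g * e = g := by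
    rintro _ ⟨r, -, rfl⟩
    simp only [mul_assoc, hee]
  have hGR : (fun q => q * e) '' R ⊆ R := by
    rintro _ ⟨r, hr, rfl⟩
    exact hRi r hr e
  have hrinv : ∀ g ∈ R, ∃ h ∈ (fun q => q * e) '' R, g * h = e := by
    intro g hg
    obtain ⟨r, hr, hgr⟩ := hRsub g he
    refine ⟨r * e, ⟨r, hr, rfl⟩, ?_⟩
    rw [← mul_assoc]
    exact (congrArg (· * e) hgr).trans hee
  refine ⟨(fun q => q * e) '' R, e, (hr e).isClosedMap _ hRc, ⟨e, he, hee⟩, fun p => ?_,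
    fun g hg => hleft g (hGR hg), hright, fun g hg => ?_⟩
  · apply Subset.antisymm
    · rintro _ ⟨_, ⟨r, hr, rfl⟩, rfl⟩
      exact ⟨p * r, hRmaps p r hr, mul_assoc _ _ _⟩
    · rintro _ ⟨r, hr, rfl⟩
      obtain ⟨r', hr', rfl⟩ := hRsub p hr
      exact ⟨r' * e, ⟨r', hr', rfl⟩, (mul_assoc _ _ _).symm⟩
  · obtain ⟨h, hh, hgh⟩ := hrinv g (hGR hg)
    obtain ⟨k, hk, hhk⟩ := hrinv h (hGR hh)
    refine ⟨h, hh, ?_⟩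
    have : k = g := by
      rw [← hleft k (hGR hk), ← hgh, mul_assoc, hhk, hright g hg]
    rw [← this, hhk]

/-- Pullback of continuous functions on a compact space along a continuous map. -/
def pullbackBCF {E S : Type*} [TopologicalSpace E] [CompactSpace E] [TopologicalSpace S]
    (θ : C(S, E)) : C(E, ℂ) →L[ℂ] (S →ᵇ ℂ) :=
  LinearMap.mkContinuous
    { toFun := fun ψ => (mkOfCompact ψ).compContinuous θ
      map_add' := fun _ _ => rfl
      map_smul' := fun _ _ => rfl } 1 fun ψ => by
    rw [one_mul]
    exact (norm_le (norm_nonneg _)).2 fun s => ψ.norm_coe_le_norm _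

@[simp]
lemma pullbackBCF_apply {E S : Type*} [TopologicalSpace E] [CompactSpace E]
    [TopologicalSpace S] (θ : C(S, E)) (ψ : C(E, ℂ)) (s : S) :
    pullbackBCF θ ψ s = ψ (θ s) := rfl

/-- A left invariant mean on `WAP(S)` induces a left invariant mean on `C(E)` for every compact
semitopological semigroup compactification `E` of `S`. -/
theorem exists_leftInvariant_of_hasLIM {E S : Type*} [Semigroup E] [TopologicalSpace E]
    [CompactSpace E] [T2Space E] [Semigroup S] [TopologicalSpace S]
    (hl : ∀ p : E, Continuous fun q => p * q)
    (hr : ∀ q : E, Continuous fun p => p * q) (θ : C(S, E)) (hθ : DenseRange θ)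
    (hmul : ∀ s t, θ (s * t) = θ s * θ t) (hLIM : HasLIM S (WAPset S)) :
    ∃ m : C(E, ℂ) →L[ℂ] ℂ, m 1 = 1 ∧
      ∀ (p : E) (ψ : C(E, ℂ)), m (ψ.comp ⟨fun q => p * q, hl p⟩) = m ψ := by
  obtain ⟨μ, -, hμ₁, hμ⟩ := hLIM
  refine ⟨μ.comp (pullbackBCF θ), ?_, fun p ψ => ?_⟩
  · rw [← hμ₁]
    rfl
  let L : E → C(E, ℂ) := fun p => ψ.comp ⟨fun q => p * q, hl p⟩
  have hL : ∀ ν : C(E, ℂ) →L[ℂ] ℂ, Continuous fun p => ν (L p) := fun ν =>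
    continuous_apply_of_continuous_eval L (fun q => ψ.continuous.comp (hr q)) (M := ‖ψ‖)
      (fun p => (ContinuousMap.norm_le _ (norm_nonneg _)).2 fun q => ψ.norm_coe_le_norm _) ν
  let g : S → S →ᵇ ℂ := fun s => pullbackBCF θ (L (θ s))
  have hg : IsLTranslates S (pullbackBCF θ ψ) g := fun s t => by
    simp [g, L, hmul]
  have hcomp : @IsCompact _ (weakTop ℂ (S →ᵇ ℂ)) (range fun p => pullbackBCF θ (L p)) := by
    refine @isCompact_range _ _ _ (weakTop ℂ (S →ᵇ ℂ)) _ _ ?_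
    refine continuous_iInf_rng.2 fun ν => continuous_induced_rng.2 ?_
    exact hL (ν.comp (pullbackBCF θ))
  have hT2 : @T2Space _ (weakTop ℂ (S →ᵇ ℂ)) := by
    refine @T2Space.of_injective_continuous _ (S → ℂ) (weakTop ℂ (S →ᵇ ℂ)) _ _ (fun f => ⇑f)
      DFunLike.coe_injective (@continuous_pi _ _ _ (weakTop ℂ (S →ᵇ ℂ)) _ _ fun s => ?_)
    exact continuous_iInf_dom (i := evalCLM ℂ s) continuous_induced_dom
  have hWAP : pullbackBCF θ ψ ∈ WAPset S := by
    refine ⟨g, hg, ?_⟩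
    refine @IsCompact.of_isClosed_subset _ (weakTop ℂ (S →ᵇ ℂ)) _ _ hcomp
      (@isClosed_closure _ (weakTop ℂ (S →ᵇ ℂ)) _) ?_
    refine @closure_minimal _ (weakTop ℂ (S →ᵇ ℂ)) _ _ ?_
      (@IsCompact.isClosed _ (weakTop ℂ (S →ᵇ ℂ)) hT2 _ hcomp)
    rintro _ ⟨s, rfl⟩
    exact ⟨θ s, rfl⟩
  have := hθ.equalizer (hL (μ.comp (pullbackBCF θ))) continuous_const
    (funext fun s => hμ _ hWAP g hg s)
  exact congrFun this p

end SemitopologicalSemigroup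

section DualSpace

open Filter Topology

lemma isClosed_setOf_norm_le_of_continuous_eval {V Z : Type*} [SeminormedAddCommGroup V]
    [NormedSpace ℝ V] [TopologicalSpace Z] {f : Z → StrongDual ℝ V}
    (hf : ∀ v, Continuous fun z => f z v) (t : ℝ) : IsClosed {z | ‖f z‖ ≤ t} := by
  rcases lt_or_ge t 0 with ht | ht
  · have : {z | ‖f z‖ ≤ t} = ∅ :=
      eq_empty_of_forall_notMem fun z hz => absurd (hz.trans_lt ht) (norm_nonneg _).not_gt
    rw [this]
    exact isClosed_empty
  · have : {z | ‖f z‖ ≤ t} = ⋂ v, {z | ‖f z v‖ ≤ t * ‖v‖} := by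
      ext z
      simp [ContinuousLinearMap.opNorm_le_iff ht]
    rw [this]
    exact isClosed_iInter fun v => isClosed_le (hf v).norm continuous_const

lemma exists_tendsto_eval_of_norm_le {V ι : Type*} [SeminormedAddCommGroup V] [NormedSpace ℝ V]
    (U : Ultrafilter ι) {f : ι → StrongDual ℝ V} {M : ℝ} (hf : ∀ i, ‖f i‖ ≤ M) :
    ∃ φ : StrongDual ℝ V, ∀ v, Tendsto (fun i => f i v) U (𝓝 (φ v)) := by
  obtain ⟨φ, -, hφ⟩ := (WeakDual.isCompact_closedBall (𝕜 := ℝ) (0 : StrongDual ℝ V) M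
    ).ultrafilter_le_nhds (U.map fun i => StrongDual.toWeakDual (f i)) 
      (tendsto_principal.2 (.of_forall fun i => by simpa using hf i))
  exact ⟨WeakDual.toStrongDual φ, fun v => ((WeakDual.eval_continuous v).tendsto φ).comp hφ⟩

set_option maxSynthPendingDepth 3 in
/-- In the dual of an `M`-embedded space, a weak* limit `c` of points of `A` lies in the closed
linear span of `A` provided the largest distance from `c` to `F` is as large as it can be for
a weak* limit. -/
theorem mem_closure_span_of_tendsto {X ι : Type*} [NormedAddCommGroup X] [NormedSpace ℝ X]
    (hM : MEmbeddedSpace X) (U : Ultrafilter ι) {a : ι → StrongDual ℝ X} {c : StrongDual ℝ X}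
    (hac : ∀ x, Tendsto (fun i => a i x) U (𝓝 (c x))) {A F : Set (StrongDual ℝ X)}
    (haA : ∀ᶠ i in U, a i ∈ A) (hF : F.Nonempty) {r : ℝ} (har : ∀ i, ∀ y ∈ F, ‖a i - y‖ ≤ r)
    (hcr : ∀ t < r, ∃ y ∈ F, t < ‖c - y‖) :
    c ∈ closure (Submodule.span ℝ A : Set (StrongDual ℝ X)) := by
  obtain ⟨y₀, hy₀⟩ := hF
  have hbd : ∀ i, ‖NormedSpace.inclusionInDoubleDual ℝ (StrongDual ℝ X) (a i)‖ ≤ r + ‖y₀‖ :=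
    fun i => by
      refine (NormedSpace.double_dual_bound ℝ _ _).trans ?_
      calc ‖a i‖ = ‖(a i - y₀) + y₀‖ := by rw [sub_add_cancel]
        _ ≤ ‖a i - y₀‖ + ‖y₀‖ := norm_add_le _ _
        _ ≤ r + ‖y₀‖ := by gcongr; exact har i y₀ hy₀
  obtain ⟨φ, hφ⟩ := exists_tendsto_eval_of_norm_le U hbd
  have hφ' : ∀ ξ : StrongDual ℝ (StrongDual ℝ X), Tendsto (fun i => ξ (a i)) U (𝓝 (φ ξ)) := hφ
  obtain ⟨g, H, hH, hgH⟩ := hM.1 φ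
  obtain rfl : g = c := by
    ext x
    have h₁ := hφ' (NormedSpace.inclusionInDoubleDual ℝ X x)
    have h₂ : φ (NormedSpace.inclusionInDoubleDual ℝ X x) = g x := by
      rw [hgH, _root_.add_apply, hH, add_zero]
      rfl
    rw [h₂] at h₁
    exact tendsto_nhds_unique h₁ (hac x)
  have hdist : ∀ y ∈ F, ‖g - y‖ + ‖H‖ ≤ r := by
    intro y hy
    have h₁ := hM.2 (g - y) H hH
    have h₂ : ‖NormedSpace.inclusionInDoubleDual ℝ (StrongDual ℝ X) (g - y)‖ = ‖g - y‖ :=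
      (NormedSpace.inclusionInDoubleDualLi ℝ (E := StrongDual ℝ X)).norm_map _
    rw [← h₂, ← h₁]
    obtain ⟨i₀, -⟩ := U.nonempty_of_mem univ_mem
    refine ContinuousLinearMap.opNorm_le_bound _ ((norm_nonneg _).trans (har i₀ y hy))
      fun ξ => ?_
    have h₃ : (NormedSpace.inclusionInDoubleDual ℝ (StrongDual ℝ X) (g - y) + H) ξ
        = φ ξ - ξ y := by
      rw [hgH, map_sub]
      simp only [_root_.add_apply, _root_.sub_apply,
        NormedSpace.dual_def]
      ring
    rw [h₃]
    refine le_of_tendsto ((hφ' ξ).sub_const (ξ y)).norm (.of_forall fun i => ?_)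
    rw [← map_sub, mul_comm]
    exact (ξ.le_opNorm _).trans (by gcongr; exact har i y hy)
  have hH0 : H = 0 := by
    by_contra hne
    obtain ⟨y, hy, hlt⟩ := hcr (r - ‖H‖) (sub_lt_self r (norm_pos_iff.2 hne))
    linarith [hdist y hy]
  by_contra hc
  obtain ⟨ξ, u, hξ, hu⟩ := geometric_hahn_banach_closed_point
    (Submodule.convex _).closure isClosed_closure hc
  have hφξ : φ ξ = ξ g := by
    rw [hgH, hH0, add_zero]
    rfl
  refine hu.not_ge (hφξ ▸ le_of_tendsto (hφ' ξ) ?_)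
  filter_upwards [haA] with i hi
  exact (hξ _ (subset_closure (Submodule.subset_span hi))).le

lemma exists_norm_le_of_continuous_eval {X C : Type*} [NormedAddCommGroup X] [NormedSpace ℝ X]
    [CompleteSpace X] [TopologicalSpace C] [CompactSpace C] {j : C → StrongDual ℝ X}
    (hj : ∀ x, Continuous fun c => j c x) : ∃ M, ∀ c, ‖j c‖ ≤ M := by
  refine banach_steinhaus fun x => ?_
  obtain ⟨M, hM⟩ := (isCompact_range (hj x).norm).bddAbove
  exact ⟨M, fun c => hM ⟨c, rfl⟩⟩

end DualSpace

section FixedPoint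

open Filter Topology

lemma exists_minimal_isClosed_convex_mapsTo {C W P : Type*} [TopologicalSpace C] [CompactSpace C]
    [AddCommGroup W] [Module ℝ W] {j : C → W} (hj : Function.Injective j) (act : P → C → C)
    {A : Set C} (hA : IsClosed A) (hAne : A.Nonempty) (hAcv : Convex ℝ (j '' A))
    (hAinv : ∀ p, MapsTo (act p) A A) :
    ∃ B ⊆ A, IsClosed B ∧ B.Nonempty ∧ Convex ℝ (j '' B) ∧ (∀ p, MapsTo (act p) B B) ∧
      ∀ B' ⊆ B, IsClosed B' → B'.Nonempty → Convex ℝ (j '' B') →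
        (∀ p, MapsTo (act p) B' B') → B' = B := by
  obtain ⟨B, hBA, hB⟩ := zorn_superset_nonempty
    {B : Set C | IsClosed B ∧ B.Nonempty ∧ Convex ℝ (j '' B) ∧ ∀ p, MapsTo (act p) B B}
    (fun c hc hchain hcne => by
      refine ⟨⋂₀ c, ⟨isClosed_sInter fun B hB => (hc hB).1, ?_, ?_, fun p x hx B hB => ?_⟩,
        fun B hB => sInter_subset_of_mem hB⟩
      · have := hcne.to_subtype
        exact IsCompact.nonempty_sInter_of_directed_nonempty_isCompact_isClosed
          (show IsChain (· ⊇ ·) c from hchain.symm).directedOn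
          (fun B hB => (hc hB).2.1) (fun B hB => (hc hB).1.isCompact) fun B hB => (hc hB).1
      · rw [sInter_eq_biInter, hj.injOn.image_biInter_eq hcne]
        exact convex_iInter₂ fun B hB => (hc hB).2.2.1
      · exact (hc hB).2.2.2 p (hx B hB)) A ⟨hA, hAne, hAcv, hAinv⟩
  obtain ⟨⟨hB₁, hB₂, hB₃, hB₄⟩, hmin⟩ := hB
  exact ⟨B, hBA, hB₁, hB₂, hB₃, hB₄, fun _ hsub h₁ h₂ h₃ h₄ =>
    hsub.antisymm (hmin ⟨h₁, h₂, h₃, h₄⟩ hsub)⟩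

/-- If `B` is a minimal closed convex invariant set and each `act p` maps `F` onto `F`, then the
supremum of the distances from `c ∈ B` to the points of `F` does not depend on `c`. -/
lemma exists_radius {C V P : Type*} [TopologicalSpace C] [SeminormedAddCommGroup V]
    [NormedSpace ℝ V] {j : C → StrongDual ℝ V} (hj : ∀ v, Continuous fun c => j c v)
    {M : ℝ} (hM : ∀ c, ‖j c‖ ≤ M) {act : P → C → C}
    (hact : ∀ p c d, ‖j (act p c) - j (act p d)‖ ≤ ‖j c - j d‖) {B F : Set C}
    (hB : IsClosed B) (hBne : B.Nonempty)
    (hBcv : Convex ℝ (j '' B)) (hBinv : ∀ p, MapsTo (act p) B B)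
    (hBmin : ∀ B' ⊆ B, IsClosed B' → B'.Nonempty → Convex ℝ (j '' B') →
        (∀ p, MapsTo (act p) B' B') → B' = B)
    (hF : F.Nonempty) (hFinv : ∀ p, F ⊆ act p '' F) :
    ∃ r : ℝ, (∀ c ∈ B, ∀ y ∈ F, ‖j c - j y‖ ≤ r) ∧ ∀ t < r, ∀ c ∈ B, ∃ y ∈ F, t < ‖j c - j y‖ := by
  set R : Set ℝ := {t | ∀ c ∈ B, ∀ y ∈ F, ‖j c - j y‖ ≤ t}
  have hRne : R.Nonempty := ⟨M + M, fun c _ y _ =>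
    (norm_sub_le _ _).trans (add_le_add (hM c) (hM y))⟩
  have hRbdd : BddBelow R := by
    obtain ⟨⟨c, hc⟩, y, hy⟩ := hBne, hF
    exact ⟨0, fun t ht => (norm_nonneg _).trans (ht c hc y hy)⟩
  refine ⟨sInf R, fun c hc y hy => le_csInf hRne fun t ht => ht c hc y hy, fun t ht c hc => ?_⟩
  by_contra! hcon
  refine (csInf_le hRbdd ?_).not_gt ht
  have hsub := hBmin {c ∈ B | ∀ y ∈ F, ‖j c - j y‖ ≤ t} (sep_subset _ _) ?_ ⟨c, hc, hcon⟩ ?_ ?_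
  · intro c hc y hy
    rw [← hsub] at hc
    exact hc.2 y hy
  · have : {c ∈ B | ∀ y ∈ F, ‖j c - j y‖ ≤ t} = B ∩ ⋂ y ∈ F, {c | ‖j c - j y‖ ≤ t} := by
      ext
      simp
    rw [this]
    exact hB.inter (isClosed_biInter fun y _ => isClosed_setOf_norm_le_of_continuous_eval
      (fun v => (hj v).sub continuous_const) t)
  · have : j '' {c ∈ B | ∀ y ∈ F, ‖j c - j y‖ ≤ t} =
        j '' B ∩ ⋂ y ∈ F, Metric.closedBall (j y) t := by
      ext φ
      simp only [mem_image, mem_ofPred_eq, mem_inter_iff, mem_iInter, mem_closedBall_iff_norm]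
      constructor
      · rintro ⟨c, ⟨hc, h⟩, rfl⟩
        exact ⟨⟨c, hc, rfl⟩, h⟩
      · rintro ⟨⟨c, hc, rfl⟩, h⟩
        exact ⟨c, ⟨hc, h⟩, rfl⟩
    rw [this]
    exact hBcv.inter (convex_iInter₂ fun y _ => convex_closedBall _ _)
  · rintro p c ⟨hc, h⟩
    refine ⟨hBinv p hc, fun y hy => ?_⟩
    obtain ⟨z, hz, rfl⟩ := hFinv p hy
    exact (hact p c z).trans (h z hz)

/-- If the supremum of the distances from `c ∈ B` to the points of `F` equals `r > 0` for every
point `c` of the convex set `B`, then no finite subset of `B` is an `r / 2`-net for `F`. -/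
lemma exists_lt_norm_sub_of_radius {W : Type*} [SeminormedAddCommGroup W] [NormedSpace ℝ W]
    {B F : Set W} (hB : Convex ℝ B) (hF : F.Nonempty) {r : ℝ} (hr : 0 < r)
    (hle : ∀ c ∈ B, ∀ y ∈ F, ‖c - y‖ ≤ r) (hlt : ∀ t < r, ∀ c ∈ B, ∃ y ∈ F, t < ‖c - y‖)
    (s : Finset W) (hs : (s : Set W) ⊆ B) : ∃ y ∈ F, ∀ z ∈ s, r / 2 < ‖z - y‖ := by
  classical
  by_contra! h
  have hsne : s.Nonempty := by
    obtain ⟨y, hy⟩ := hF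
    obtain ⟨z, hz, -⟩ := h y hy
    exact ⟨z, hz⟩
  have hn : (0 : ℝ) < s.card := by exact_mod_cast hsne.card_pos
  have hmem : ∑ z ∈ s, (s.card : ℝ)⁻¹ • z ∈ B :=
    hB.sum_mem (fun _ _ => by positivity) (by simp [hn.ne']) fun z hz => hs hz
  obtain ⟨y, hy, hylt⟩ := hlt (r - r / (2 * s.card)) (sub_lt_self r (by positivity)) _ hmem
  obtain ⟨w, hw, hwy⟩ := h y hy
  refine hylt.not_ge ?_
  have h₁ : ∑ z ∈ s, (s.card : ℝ)⁻¹ • z - y = ∑ z ∈ s, (s.card : ℝ)⁻¹ • (z - y) := by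
    simp only [smul_sub, Finset.sum_sub_distrib, Finset.sum_const, ← Nat.cast_smul_eq_nsmul ℝ]
    rw [smul_inv_smul₀ hn.ne']
  have h₂ : ∑ z ∈ s, ‖z - y‖ ≤ (s.card : ℝ) * r - r / 2 := by
    rw [← Finset.add_sum_erase s _ hw]
    have : ∑ z ∈ s.erase w, ‖z - y‖ ≤ (s.erase w).card • r :=
      Finset.sum_le_card_nsmul _ _ _ fun z hz => hle z (hs (Finset.mem_of_mem_erase hz)) y hy
    rw [Finset.card_erase_of_mem hw, nsmul_eq_mul, Nat.cast_pred hsne.card_pos] at this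
    linarith
  calc ‖∑ z ∈ s, (s.card : ℝ)⁻¹ • z - y‖ ≤ ∑ z ∈ s, ‖(s.card : ℝ)⁻¹ • (z - y)‖ :=
        h₁ ▸ norm_sum_le _ _
    _ = (s.card : ℝ)⁻¹ * ∑ z ∈ s, ‖z - y‖ := by
        simp [norm_smul, Finset.mul_sum]
    _ ≤ (s.card : ℝ)⁻¹ * ((s.card : ℝ) * r - r / 2) := by gcongr
    _ = r - r / (2 * s.card) := by field_simp

theorem totallyBounded_image_of_isSeparable {E W : Type*} [Semigroup E] [TopologicalSpace E]
    [T2Space E] [PseudoMetricSpace W] (hl : ∀ p : E, Continuous fun q => p * q) {H : Set E}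
    (hH : IsCompact H) {e : E} (heH : e ∈ H) (hmul : ∀ p ∈ H, ∀ q ∈ H, p * q ∈ H)
    (hel : ∀ p ∈ H, e * p = p) (her : ∀ p ∈ H, p * e = p) (hinv : ∀ p ∈ H, ∃ q ∈ H, q * p = e)
    {f : E → W} (hf : ∀ h p q, dist (f (h * p)) (f (h * q)) ≤ dist (f p) (f q))
    (hfc : ∀ d t, IsClosed {p | dist (f p) d ≤ t}) (hsep : TopologicalSpace.IsSeparable (f '' H)) :
    TotallyBounded (f '' H) := by
  rw [Metric.totallyBounded_iff]
  intro ε hε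
  obtain ⟨D, hD, hDf⟩ := hsep
  have := isCompact_iff_compactSpace.1 hH
  have : Nonempty H := ⟨⟨e, heH⟩⟩
  have := hD.to_subtype
  obtain ⟨d, ⟨v, hvH⟩, hv⟩ := nonempty_interior_of_iUnion_of_closed
    (f := fun d : D => {p : H | dist (f p) d ≤ ε / 4})
    (fun d => (hfc d _).preimage continuous_subtype_val) (eq_univ_of_forall fun p => by
      obtain ⟨d, hd, hpd⟩ := Metric.mem_closure_iff.1 (hDf (mem_image_of_mem f p.2)) (ε / 4)
        (by positivity)
      exact mem_iUnion.2 ⟨⟨d, hd⟩, hpd.le⟩)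
  obtain ⟨_, hsub, ⟨V, hV, rfl⟩, hvV⟩ := mem_interior.1 hv
  have hVdist : ∀ p ∈ H, p ∈ V → dist (f p) (f v) ≤ ε / 2 := fun p hp hpV => by
    have h₁ : dist (f p) d ≤ ε / 4 := hsub (show (⟨p, hp⟩ : H) ∈ _ from hpV)
    have h₂ : dist (f v) d ≤ ε / 4 := hsub hvV
    linarith [dist_triangle_right (f p) (f v) d]
  choose! i hiH hi using hinv
  obtain ⟨t, ht⟩ := hH.elim_finite_subcover (fun h : H => {k | (h : E) * k ∈ V})
    (fun h => hV.preimage (hl h)) fun k hk => mem_iUnion.2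
      ⟨⟨v * i k, hmul v hvH _ (hiH k hk)⟩, by
        change v * i k * k ∈ V
        rw [mul_assoc, hi k hk, her v hvH]
        exact hvV⟩
  refine ⟨(fun h : H => f (i h * v)) '' t, t.finite_toSet.image _, ?_⟩
  rintro _ ⟨k, hk, rfl⟩
  obtain ⟨h, hht, hkV⟩ := mem_iUnion₂.1 (ht hk)
  refine mem_iUnion₂.2 ⟨_, mem_image_of_mem _ hht, ?_⟩
  have hk' : k = i h * (h * k) := by rw [← mul_assoc, hi h h.2, hel k hk]
  rw [Metric.mem_ball, hk']
  exact ((hf _ _ _).trans (hVdist _ (hmul h h.2 k hk) hkV)).trans_lt (half_lt_self hε)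

lemma mul_mem_closure {E : Type*} [Semigroup E] [TopologicalSpace E]
    (hl : ∀ p : E, Continuous fun q => p * q) (hr : ∀ q : E, Continuous fun p => p * q)
    {H : Set E} (hmul : ∀ p ∈ H, ∀ q ∈ H, p * q ∈ H) :
    ∀ p ∈ closure H, ∀ q ∈ closure H, p * q ∈ closure H := by
  have h₁ : ∀ p ∈ H, ∀ q ∈ closure H, p * q ∈ closure H := fun p hp q hq =>
    map_mem_closure (hl p) hq fun q hq => hmul p hp q hq
  intro p hp q hq
  rw [← closure_closure]
  exact map_mem_closure (f := fun p => p * q) (hr q) hp fun p hp => h₁ p hp q hq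

/-- A compact subsemigroup of a group with separately continuous multiplication contains
inverses. -/
lemma exists_mul_eq_of_isCompact {E : Type*} [Semigroup E] [TopologicalSpace E] [T2Space E]
    (hr : ∀ q : E, Continuous fun p => p * q) {G : Set E} {e : E}
    (hel : ∀ g ∈ G, e * g = g) (hinv : ∀ g ∈ G, ∃ h ∈ G, h * g = e)
    {H : Set E} (hHG : H ⊆ G) (hH : IsCompact H)
    (hmul : ∀ p ∈ H, ∀ q ∈ H, p * q ∈ H) : ∀ k ∈ H, ∃ k' ∈ H, k' * k = e := by
  intro k hk
  obtain ⟨_, ⟨k', hk', rfl⟩, hidem⟩ := exists_idempotent_in_compact_subsemigroup hr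
    ((fun p => p * k) '' H) ⟨_, k, hk, rfl⟩ (hH.image (hr k)) (by
      rintro _ ⟨p, hp, rfl⟩ _ ⟨q, hq, rfl⟩
      exact ⟨p * k * q, hmul _ (hmul p hp k hk) q hq, mul_assoc _ _ _⟩)
  refine ⟨k', hk', ?_⟩
  have hm := hHG (hmul k' hk' k hk)
  obtain ⟨w, -, hw⟩ := hinv _ hm
  calc k' * k = e * (k' * k) := (hel _ hm).symm
    _ = w * (k' * k * (k' * k)) := by rw [← hw, mul_assoc]
    _ = e := by rw [hidem, hw]

lemma countable_subsemigroup_closure {E : Type*} [Semigroup E] {s : Set E} (hs : s.Countable) :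
    (Subsemigroup.closure s : Set E).Countable := by
  have := hs.to_subtype
  let P : Subsemigroup E :=
    { carrier := range fun x : s × List s => x.2.foldl (fun (p : E) (q : s) => p * q) (x.1 : E)
      mul_mem' := by
        rintro _ _ ⟨⟨a, l⟩, rfl⟩ ⟨⟨b, m⟩, rfl⟩
        refine ⟨⟨a, l ++ b :: m⟩, ?_⟩
        simp only [List.foldl_append, List.foldl_cons]
        generalize List.foldl (fun (p : E) (q : s) => p * q) (a : E) l = x
        generalize (b : E) = y
        induction m generalizing y with
        | nil => rfl
        | cons c m ih => rw [List.foldl_cons, List.foldl_cons, mul_assoc, ih] }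
  refine (countable_range _).mono (show (Subsemigroup.closure s : Set E) ⊆ P from ?_)
  exact Subsemigroup.closure_le.2 fun a ha => ⟨⟨⟨a, ha⟩, []⟩, rfl⟩

/-- Let a compact semigroup `E` act nonexpansively on a weak* compact subset of the dual of an
`M`-embedded space. If `E` has a closed subset `G` which is a group and satisfies `p * G = G` for
all `p`, then every weak* closed convex invariant set contains a common fixed point. -/
theorem exists_common_fixedPoint_of_subgroup {C E : Type*} {X : Type v} [NormedAddCommGroup X]
    [NormedSpace ℝ X] [CompleteSpace X] (hM : MEmbeddedSpace X) [TopologicalSpace C]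
    [CompactSpace C] {j : C → StrongDual ℝ X} (hjinj : Function.Injective j)
    (hj : ∀ x, Continuous fun c => j c x) [Semigroup E] [TopologicalSpace E] [CompactSpace E]
    [T2Space E] (hl : ∀ p : E, Continuous fun q => p * q) (hr : ∀ q : E, Continuous fun p => p * q)
    {G : Set E} (hG : IsClosed G) {e : E} (he : e ∈ G)
    (hGmul : ∀ p : E, (fun q => p * q) '' G = G) (hel : ∀ g ∈ G, e * g = g)
    (her : ∀ g ∈ G, g * e = g) (hinv : ∀ g ∈ G, ∃ h ∈ G, h * g = e)
    {act : E → C → C} (hmul : ∀ p q c, act (p * q) c = act p (act q c))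
    (hcont : ∀ c, Continuous fun p => act p c)
    (hact : ∀ p c d, ‖j (act p c) - j (act p d)‖ ≤ ‖j c - j d‖)
    {A : Set C} (hA : IsClosed A) (hAne : A.Nonempty) (hAcv : Convex ℝ (j '' A))
    (hAinv : ∀ p, MapsTo (act p) A A) : ∃ c ∈ A, ∀ p, act p c = c := by
  obtain ⟨B, hBA, hB, ⟨x₀, hx₀⟩, hBcv, hBinv, hBmin⟩ :=
    exists_minimal_isClosed_convex_mapsTo hjinj act hA hAne hAcv hAinv
  obtain ⟨M, hjM⟩ := exists_norm_le_of_continuous_eval hj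
  set F : Set C := (fun g => act g x₀) '' G
  have hFne : F.Nonempty := ⟨_, e, he, rfl⟩
  have hFB : F ⊆ B := by
    rintro _ ⟨g, -, rfl⟩
    exact hBinv g hx₀
  obtain ⟨r, hle, hlt⟩ := exists_radius hj hjM hact hB ⟨x₀, hx₀⟩ hBcv hBinv hBmin hFne (by
    rintro p _ ⟨g, hg, rfl⟩
    obtain ⟨h, hh, rfl⟩ := (hGmul p).ge hg
    exact ⟨_, ⟨h, hh, rfl⟩, (hmul p h x₀).symm⟩)
  rcases le_or_gt r 0 with hr₀ | hr₀
  · obtain ⟨y, hy⟩ := hFne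
    refine ⟨y, hBA (hFB hy), fun p => hjinj ?_⟩
    rw [← sub_eq_zero, ← norm_le_zero_iff]
    exact (hle _ (hBinv p (hFB hy)) y hy).trans hr₀
  exfalso
  set f : E → StrongDual ℝ X := fun p => j (act p x₀)
  have hle' : ∀ c ∈ j '' B, ∀ y ∈ j '' F, ‖c - y‖ ≤ r := by
    rintro _ ⟨c, hc, rfl⟩ _ ⟨y, hy, rfl⟩
    exact hle c hc y hy
  have hlt' : ∀ t < r, ∀ c ∈ j '' B, ∃ y ∈ j '' F, t < ‖c - y‖ := by
    rintro t ht _ ⟨c, hc, rfl⟩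
    obtain ⟨y, hy, h⟩ := hlt t ht c hc
    exact ⟨_, ⟨y, hy, rfl⟩, h⟩
  have hfB : ∀ p, f p ∈ j '' B := fun p => ⟨_, hBinv p hx₀, rfl⟩
  obtain ⟨g, hgG, hg⟩ := exists_seq_of_forall_finset_exists (· ∈ G)
    (fun p q => r / 2 < ‖f p - f q‖) fun s _ => by
      classical
      obtain ⟨_, ⟨_, ⟨q, hq, rfl⟩, rfl⟩, h⟩ := exists_lt_norm_sub_of_radius hBcv (hFne.image j) hr₀
        hle' hlt' (s.image f) (by
          intro y hy
          obtain ⟨p, -, rfl⟩ := Finset.mem_image.1 hy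
          exact hfB p)
      exact ⟨q, hq, fun p hp => h _ (Finset.mem_image_of_mem f hp)⟩
  set H := Subsemigroup.closure (range g)
  have hHG : closure (H : Set E) ⊆ G := by
    let G' : Subsemigroup E := ⟨G, fun {p q} _ hq => (hGmul p).le ⟨q, hq, rfl⟩⟩
    refine closure_minimal (show H ≤ G' from Subsemigroup.closure_le.2 ?_) hG
    rintro _ ⟨n, rfl⟩
    exact hgG n
  have hHmul := mul_mem_closure hl hr (H := (H : Set E)) fun p hp q hq => H.mul_mem hp hq
  have hgH : ∀ n, g n ∈ closure (H : Set E) := fun n =>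
    subset_closure (Subsemigroup.subset_closure ⟨n, rfl⟩)
  have hHinv := exists_mul_eq_of_isCompact hr hel hinv hHG isClosed_closure.isCompact hHmul
  have heH : e ∈ closure (H : Set E) := by
    obtain ⟨k, hk, hke⟩ := hHinv _ (hgH 0)
    exact hke ▸ hHmul k hk _ (hgH 0)
  have hfc : ∀ x, Continuous fun p => f p x := fun x => (hj x).comp (hcont x₀)
  have hsep : TopologicalSpace.IsSeparable (f '' closure (H : Set E)) := by
    refine (((countable_subsemigroup_closure (countable_range g)).image f).isSeparable.span (R := ℝ)
      ).closure.mono ?_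
    rintro _ ⟨k, hk, rfl⟩
    obtain ⟨U, hHU, hU⟩ := mem_closure_iff_ultrafilter.1 hk
    exact mem_closure_span_of_tendsto hM U (fun x => ((hfc x).tendsto k).mono_left hU)
      (mem_of_superset hHU fun p hp => mem_image_of_mem f hp) (hFne.image j)
      (fun p => hle' _ (hfB p)) fun t ht => hlt' t ht _ (hfB k)
  have htb := totallyBounded_image_of_isSeparable hl isClosed_closure.isCompact heH hHmul
    (fun p hp => hel p (hHG hp)) (fun p hp => her p (hHG hp)) hHinv (f := f)
    (fun h p q => by simpa only [f, dist_eq_norm, hmul] using hact h _ _)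
    (fun d t => by
      simpa only [dist_eq_norm] using isClosed_setOf_norm_le_of_continuous_eval
        (f := fun p => f p - d) (fun x => (hfc x).sub continuous_const) t) hsep
  obtain ⟨t, ht, hcov⟩ := Metric.totallyBounded_iff.1 htb (r / 4) (by positivity)
  have hnet : ∀ n, ∃ y : t, dist (f (g n)) y < r / 4 := fun n => by
    obtain ⟨y, hy, h⟩ := mem_iUnion₂.1 (hcov (mem_image_of_mem f (hgH n)))
    exact ⟨⟨y, hy⟩, h⟩
  choose y hy using hnet
  have := ht.to_subtype
  obtain ⟨m, n, hmn, hymn⟩ := Finite.exists_ne_map_eq_of_infinite y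
  have hclose : dist (f (g m)) (f (g n)) < r / 2 := by
    have h := hy n
    rw [← hymn] at h
    linarith [hy m, dist_triangle_right (f (g m)) (f (g n)) (y m)]
  rcases hmn.lt_or_gt with h | h
  · exact (hg m n h).not_ge (dist_eq_norm (f (g m)) _ ▸ hclose.le)
  · exact (hg n m h).not_ge (dist_eq_norm (f (g n)) _ ▸ dist_comm (f (g m)) _ ▸ hclose.le)

end FixedPoint

section Retraction

open Filter Topology

/-- **Bruck's retraction theorem**: if every closed convex invariant set contains a common fixed
point, then the common fixed point set is a nonexpansive retract. -/
theorem exists_nonexpansive_retraction {C V P : Type*} [TopologicalSpace C] [CompactSpace C]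
    [T2Space C] [NormedAddCommGroup V] [NormedSpace ℝ V] {j : C → StrongDual ℝ V}
    (hjinj : Function.Injective j) (hj : ∀ v, Continuous fun c => j c v)
    (hcv : Convex ℝ (range j)) {act : P → C → C}
    (hact : ∀ p c d, ‖j (act p c) - j (act p d)‖ ≤ ‖j c - j d‖)
    (hfix : ∀ A : Set C, IsClosed A → A.Nonempty → Convex ℝ (j '' A) →
      (∀ p, MapsTo (act p) A A) → ∃ c ∈ A, ∀ p, act p c = c) :
    ∃ r : C → C, (∀ c p, act p (r c) = r c) ∧ (∀ c, (∀ p, act p c = c) → r c = c) ∧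
      ∀ c d, ‖j (r c) - j (r d)‖ ≤ ‖j c - j d‖ := by
  let le (T U : C → C) : Prop := ∀ c d, ‖j (T c) - j (T d)‖ ≤ ‖j (U c) - j (U d)‖
  have hle_closed : ∀ U, IsClosed {T | le T U} := fun U => by
    simp only [le, ofPred_forall]
    exact isClosed_iInter fun c => isClosed_iInter fun d =>
      isClosed_setOf_norm_le_of_continuous_eval (f := fun T : C → C => j (T c) - j (T d))
        (fun v => ((hj v).comp (continuous_apply c)).sub ((hj v).comp (continuous_apply d))) _
  let N : Set (C → C) := {T | le T id} ∩ {T | ∀ c, (∀ p, act p c = c) → T c = c}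
  have hN : IsClosed N := by
    refine (hle_closed id).inter ?_
    simp only [ofPred_forall]
    exact isClosed_iInter fun c => isClosed_iInter fun _ =>
      isClosed_eq (continuous_apply c) continuous_const
  have hidN : id ∈ N := ⟨fun c d => le_rfl, fun c _ => rfl⟩
  obtain ⟨⟨r, hrN⟩, hrmin⟩ := exists_maximal_of_chains_bounded
    (r := fun U T : N => le T U) (fun c hc => by
      rcases c.eq_empty_or_nonempty with rfl | hcne
      · exact ⟨⟨id, hidN⟩, by simp⟩
      have := hcne.to_subtype
      obtain ⟨T, hT⟩ := IsCompact.nonempty_iInter_of_directed_nonempty_isCompact_isClosed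
        (fun U : c => N ∩ {T | le T U.1}) (by
          rintro ⟨U, hU⟩ ⟨W, hW⟩
          rcases eq_or_ne U W with rfl | hne
          · exact ⟨⟨U, hU⟩, subset_rfl, subset_rfl⟩
          rcases hc hU hW hne with h | h
          · exact ⟨⟨W, hW⟩, fun T hT => ⟨hT.1, fun c d => (hT.2 c d).trans (h c d)⟩, subset_rfl⟩
          · exact ⟨⟨U, hU⟩, subset_rfl, fun T hT => ⟨hT.1, fun c d => (hT.2 c d).trans (h c d)⟩⟩)
        (fun U => ⟨U.1, U.1.2, fun c d => le_rfl⟩)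
        (fun U => (hN.inter (hle_closed _)).isCompact) fun U => hN.inter (hle_closed _)
      rw [mem_iInter] at hT
      exact ⟨⟨T, (hT ⟨_, hcne.some_mem⟩).1⟩, fun U hU => (hT ⟨U, hU⟩).2⟩)
    fun {U W T} h₁ h₂ c d => (h₂ c d).trans (h₁ c d)
  have hcomp : ∀ T ∈ N, ∀ U ∈ N, T ∘ U ∈ N := fun T hT U hU =>
    ⟨fun c d => (hT.1 _ _).trans (hU.1 c d), fun c hc => by
      rw [Function.comp_apply, hU.2 c hc, hT.2 c hc]⟩
  refine ⟨r, fun x => ?_, hrN.2, hrN.1⟩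
  obtain ⟨_, ⟨T, hTN, rfl⟩, hz⟩ := hfix ((fun T : C → C => T (r x)) '' N)
    (hN.isCompact.image (continuous_apply (r x))).isClosed ⟨_, id, hidN, rfl⟩ (by
      rintro _ ⟨_, ⟨T, hT, rfl⟩, rfl⟩ _ ⟨_, ⟨U, hU, rfl⟩, rfl⟩ a b ha hb hab
      choose W hW using fun c => hcv (mem_range_self (T c)) (mem_range_self (U c)) ha hb hab
      refine ⟨_, ⟨W, ⟨fun c d => ?_, fun c hc => hjinj ?_⟩, rfl⟩, hW _⟩
      · rw [hW, hW, show a • j (T c) + b • j (U c) - (a • j (T d) + b • j (U d)) =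
          a • (j (T c) - j (T d)) + b • (j (U c) - j (U d)) by module]
        refine (norm_add_le _ _).trans ?_
        rw [norm_smul, norm_smul, Real.norm_of_nonneg ha, Real.norm_of_nonneg hb]
        calc a * ‖j (T c) - j (T d)‖ + b * ‖j (U c) - j (U d)‖
            ≤ a * ‖j c - j d‖ + b * ‖j c - j d‖ := by
              gcongr
              · exact hT.1 c d
              · exact hU.1 c d
          _ = ‖j c - j d‖ := by rw [← add_mul, hab, one_mul]
      · rw [hW, hT.2 c hc, hU.2 c hc, ← add_smul, hab, one_smul]) (by
      rintro p _ ⟨T, hT, rfl⟩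
      exact ⟨act p ∘ T, hcomp (act p) ⟨hact p, fun c hc => hc p⟩ T hT, rfl⟩)
  have hmin := hrmin ⟨T ∘ r, hcomp T hTN r hrN⟩ (fun c d => hTN.1 _ _) x (T (r x))
  have hrz : r (T (r x)) = T (r x) := hrN.2 _ hz
  have hTz : T (T (r x)) = T (r x) := hTN.2 _ hz
  have : r x = T (r x) := hjinj <| by
    simpa [hrz, hTz, sub_eq_zero] using hmin
  rw [this]
  exact hz

end Retraction

section EnvelopingSemigroup

open Filter Topology

/-- A nonexpansive dynamical system on a weak* compact set whose enveloping semigroup consists of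
continuous maps has a common fixed point in every weak* closed convex invariant set, provided that
`WAP(S)` has a left invariant mean. -/
theorem exists_common_fixedPoint_of_hasLIM {C S : Type*} {X : Type v} [NormedAddCommGroup X]
    [NormedSpace ℝ X] [CompleteSpace X] (hM : MEmbeddedSpace X) [TopologicalSpace C]
    [CompactSpace C] [T2Space C] {j : C → StrongDual ℝ X} (hjinj : Function.Injective j)
    (hj : ∀ x, Continuous fun c => j c x) [Semigroup S] [TopologicalSpace S]
    {ρ : S → C → C} (hmul : ∀ s t c, ρ (s * t) c = ρ s (ρ t c))
    (horb : ∀ c, Continuous fun s => ρ s c) (henv : ∀ T ∈ closure (range ρ), Continuous T)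
    (hρ : ∀ s c d, ‖j (ρ s c) - j (ρ s d)‖ ≤ ‖j c - j d‖) (hLIM : HasLIM S (WAPset S))
    {A : Set C} (hA : IsClosed A) (hAne : A.Nonempty) (hAcv : Convex ℝ (j '' A))
    (hAinv : ∀ s, MapsTo (ρ s) A A) : ∃ c ∈ A, ∀ s, ρ s c = c := by
  have hcomp : ∀ T ∈ closure (range ρ), ∀ U ∈ closure (range ρ), T ∘ U ∈ closure (range ρ) := by
    have hright : ∀ U : C → C, Continuous fun T : C → C => T ∘ U := fun U =>
      continuous_pi fun c => continuous_apply (U c)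
    have hleft : ∀ T : C → C, Continuous T → Continuous fun U : C → C => T ∘ U := fun T hT =>
      continuous_pi fun c => hT.comp (continuous_apply c)
    intro T hT U hU
    rw [← closure_closure]
    refine map_mem_closure (f := fun T => T ∘ U) (hright U) hT ?_
    rintro _ ⟨s, rfl⟩
    refine map_mem_closure (hleft _ (henv _ (subset_closure ⟨s, rfl⟩))) hU ?_
    rintro _ ⟨t, rfl⟩
    exact ⟨s * t, funext fun c => hmul s t c⟩
  let E := closure (range ρ)
  let _ : Semigroup E :=
    { mul := fun T U => ⟨T.1 ∘ U.1, hcomp _ T.2 _ U.2⟩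
      mul_assoc := fun _ _ _ => rfl }
  have hl : ∀ p : E, Continuous fun q => p * q := fun p => by
    refine Continuous.subtype_mk (continuous_pi fun c => ?_) _
    exact (henv _ p.2).comp ((continuous_apply c).comp continuous_subtype_val)
  have hr : ∀ q : E, Continuous fun p => p * q := fun q => by
    refine Continuous.subtype_mk (continuous_pi fun c => ?_) _
    exact (continuous_apply (q.1 c)).comp continuous_subtype_val
  have : CompactSpace E := isCompact_iff_compactSpace.1 isClosed_closure.isCompact
  let θ : C(S, E) := ⟨fun s => ⟨ρ s, subset_closure ⟨s, rfl⟩⟩,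
    (continuous_pi horb).subtype_mk _⟩
  have hθ : DenseRange θ := fun T => by
    rw [closure_subtype, ← range_comp]
    exact T.2
  obtain ⟨m, hm₁, hm⟩ := exists_leftInvariant_of_hasLIM hl hr θ hθ
    (fun s t => Subtype.ext (funext fun c => hmul s t c)) hLIM
  have : Nonempty E := by
    by_contra hE
    rw [not_nonempty_iff] at hE
    have h₀ : (1 : C(E, ℂ)) = 0 := ContinuousMap.ext fun p => isEmptyElim p
    rw [h₀, map_zero] at hm₁
    exact zero_ne_one hm₁
  obtain ⟨G, e, hG, he, hGmul, hel, her, hinv⟩ :=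
    exists_isClosed_subgroup_of_leftInvariant hl hr m (map_zero m) hm₁ hm
  obtain ⟨c, hcA, hc⟩ := exists_common_fixedPoint_of_subgroup hM hjinj hj hl hr hG he hGmul hel her
    hinv (act := fun T c => T.1 c) (fun _ _ _ => rfl)
    (fun c => (continuous_apply c).comp continuous_subtype_val)
    (fun T c d => by
      have hcl : IsClosed {T : C → C | ‖j (T c) - j (T d)‖ ≤ ‖j c - j d‖} :=
        isClosed_setOf_norm_le_of_continuous_eval (f := fun T : C → C => j (T c) - j (T d))
          (fun v => ((hj v).comp (continuous_apply c)).sub ((hj v).comp (continuous_apply d))) _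
      refine closure_minimal ?_ hcl T.2
      rintro _ ⟨s, rfl⟩
      exact hρ s c d) hA hAne hAcv (fun T c hc => by
      refine closure_minimal ?_ (hA.preimage (continuous_apply c)) T.2
      rintro _ ⟨s, rfl⟩
      exact hAinv s hc)
  exact ⟨c, hcA, fun s => hc (θ s)⟩

end EnvelopingSemigroup

/-- **Theorem (M), case (ii)**: a nonexpansive dynamical system `(S,(K,weak*))` on a weak*
compact convex subset of the dual of an `M`-embedded Banach space, whose enveloping semigroup
consists of weak* continuous maps, has a common fixed point provided `WAP(S)` has a left
invariant mean; moreover the fixed point set is a nonexpansive retract of `K`. -/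
theorem fixedPoint_and_retract_MEmbedded_of_WAP_hasLIM
    {S : Type u} [Semigroup S] [TopologicalSpace S] [T2Space S]
    (hS : IsSemitopologicalSemigroup S)
    {X : Type v} [NormedAddCommGroup X] [NormedSpace ℝ X] [CompleteSpace X]
    -- `X` is an `M`-embedded Banach space
    (hM : MEmbeddedSpace X)
    (K : Set (StrongDual ℝ X)) (π : S → StrongDual ℝ X → StrongDual ℝ X)
    -- `K` is a nonempty weak* compact convex set
    (hKne : K.Nonempty) (hKcv : Convex ℝ K) (hKcpt : @IsCompact _ (wstarTop X) K)
    -- `(S,(K,weak*))` is a dynamical system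
    (hinv : ∀ s : S, MapsTo (π s) K K)
    (hact : ∀ s t : S, ∀ x ∈ K, π (s * t) x = π s (π t x))
    (horb : ∀ x ∈ K, @Continuous S _ _ (wstarTop X) fun s => π s x)
    (htra : ∀ s : S, @ContinuousOn _ _ (wstarTop X) (wstarTop X) (π s) K)
    -- the system is nonexpansive
    (hne : ∀ s : S, ∀ x ∈ K, ∀ y ∈ K, ‖π s x - π s y‖ ≤ ‖x - y‖)
    -- every member of the enveloping semigroup `E(S,K)` is weak* continuous
    (henv : ∀ T : K → K,
      T ∈ @closure (K → K)
          (@Pi.topologicalSpace K (fun _ => K)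
            (fun _ => @instTopologicalSpaceSubtype _ (· ∈ K) (wstarTop X)))
          {T' | ∃ s : S, ∀ x : K, (T' x : StrongDual ℝ X) = π s (x : StrongDual ℝ X)} →
      @Continuous K K (@instTopologicalSpaceSubtype _ (· ∈ K) (wstarTop X))
        (@instTopologicalSpaceSubtype _ (· ∈ K) (wstarTop X)) T)
    -- the amenability hypothesis
    (hLIM : HasLIM S (WAPset S)) :
    -- `S` has a fixed point in `K` ...
    (∃ x ∈ K, ∀ s : S, π s x = x) ∧
    -- ... and `F(S)` is a nonexpansive retract of `K`
    ∃ r : StrongDual ℝ X → StrongDual ℝ X,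
      (∀ x ∈ K, r x ∈ K ∧ ∀ s : S, π s (r x) = r x) ∧
      (∀ x ∈ K, r (r x) = r x) ∧
      (∀ x ∈ K, (∀ s : S, π s x = x) → r x = x) ∧
      (∀ x ∈ K, ∀ y ∈ K, ‖r x - r y‖ ≤ ‖x - y‖) := by
  let τ : TopologicalSpace K := @instTopologicalSpaceSubtype _ (· ∈ K) (wstarTop X)
  have : CompactSpace K := (@isCompact_iff_compactSpace _ (wstarTop X) K).1 hKcpt
  have hemb : Continuous fun (c : K) (x : X) => (c : StrongDual ℝ X) x :=
    @Continuous.comp _ _ _ τ (wstarTop X) _ _ _ continuous_induced_dom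
      (@continuous_subtype_val _ (wstarTop X) _)
  have : T2Space K := T2Space.of_injective_continuous
    (fun c d h => Subtype.ext (ContinuousLinearMap.ext (congrFun h))) hemb
  have hj : ∀ x, Continuous fun c : K => (c : StrongDual ℝ X) x := continuous_pi_iff.1 hemb
  let ρ (s : S) (c : K) : K := ⟨π s c, hinv s c.2⟩
  have hρ : ∀ s c d, ‖(ρ s c : StrongDual ℝ X) - ρ s d‖ ≤ ‖(c : StrongDual ℝ X) - d‖ :=
    fun s c d => hne s c c.2 d d.2
  have hfix : ∀ A : Set K, IsClosed A → A.Nonempty → Convex ℝ ((↑) '' A : Set (StrongDual ℝ X)) →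
      (∀ s, MapsTo (ρ s) A A) → ∃ c ∈ A, ∀ s, ρ s c = c := fun A hA hAne hAcv hAinv =>
    exists_common_fixedPoint_of_hasLIM hM Subtype.val_injective hj
      (fun s t c => Subtype.ext (hact s t c c.2))
      (fun c => @Continuous.subtype_mk _ _ (wstarTop X) _ _ _ (horb c c.2) _)
      (fun T hT => henv T (closure_mono (by
        rintro _ ⟨s, rfl⟩
        exact ⟨s, fun _ => rfl⟩) hT)) hρ hLIM hA hAne hAcv hAinv
  have hcv : Convex ℝ (range ((↑) : K → StrongDual ℝ X)) := by rwa [Subtype.range_coe]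
  constructor
  · obtain ⟨c, -, hc⟩ := hfix univ isClosed_univ ⟨⟨_, hKne.some_mem⟩, mem_univ _⟩
      (by rwa [image_univ]) fun s => mapsTo_univ _ _
    exact ⟨c, c.2, fun s => congrArg Subtype.val (hc s)⟩
  · obtain ⟨r, hr₁, hr₂, hr₃⟩ :=
      exists_nonexpansive_retraction Subtype.val_injective hj hcv hρ hfix
    classical
    let R (x : StrongDual ℝ X) : StrongDual ℝ X := if h : x ∈ K then r ⟨x, h⟩ else x
    have hR : ∀ c : K, R c = r c := fun c => dif_pos c.2
    have hR' : ∀ x (hx : x ∈ K), R x = r ⟨x, hx⟩ := fun x hx => hR ⟨x, hx⟩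
    refine ⟨R, fun x hx => ?_, fun x hx => ?_, fun x hx h => ?_, fun x hx y hy => ?_⟩
    · rw [hR' x hx]
      exact ⟨(r _).2, fun s => congrArg Subtype.val (hr₁ _ s)⟩
    · rw [hR' x hx, hR, hr₂ _ (hr₁ _)]
    · rw [hR' x hx, hr₂ _ fun s => Subtype.ext (h s)]
    · rw [hR' x hx, hR' y hy]
      exact hr₃ _ _
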